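/- Let f ∈ BV(ℝ) and let (f_j) ⊂ BV(ℝ) with ‖f_j − f‖_{BV} → 0. Let E = {x : M̃f(x) > |f|‾(x)}. Then (M̃f_j)'(x) → (M̃f)'(x) for almost every x ∈ E. -/

import Mathlib

open MeasureTheory Filter Set Topology

/-- Average of |f| over the interval (a,b). -/
noncomputable def mAvg (f : ℝ → ℝ) (a b : ℝ) : ℝ := (∫ t in a..b, |f t|) / (b - a)

/-- Uncentered Hardy–Littlewood maximal function. -/
noncomputable def uMax (f : ℝ → ℝ) (x : ℝ) : ℝ :=
  sSup {y | ∃ a b : ℝ, a < b ∧ a ≤ x ∧ x ≤ b ∧ y = mAvg f a b}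

/-- f has bounded variation on ℝ. -/
def BVfun (f : ℝ → ℝ) : Prop := BoundedVariationOn f Set.univ

/-- Total variation of f over a set, as a real number. -/
noncomputable def varOn (f : ℝ → ℝ) (s : Set ℝ) : ℝ := (eVariationOn f s).toReal

/-- BV norm: |f(-∞)| + Var(f). -/
noncomputable def bvNorm (f : ℝ → ℝ) : ℝ :=
  |limUnder Filter.atBot f| + varOn f Set.univ

/-- Upper precise representative: limsup over intervals I ∋ x with |I| → 0 of averages of |f|. -/
noncomputable def ubar (f : ℝ → ℝ) (x : ℝ) : ℝ :=
  ⨅ h : {h : ℝ // 0 < h},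
    sSup {y | ∃ a b : ℝ, a < b ∧ a ≤ x ∧ x ≤ b ∧ b - a ≤ h.1 ∧ y = mAvg f a b}

/-- The open "interval" (a,b) in ℝ with extended-real endpoints. -/
noncomputable def erealIoo (a b : EReal) : Set ℝ := {x : ℝ | a < (x : EReal) ∧ (x : EReal) < b}

/-- Value of g at an extended-real point, understood as a limit at ±∞. -/
noncomputable def valAt (g : ℝ → ℝ) (a : EReal) : ℝ :=
  if a = ⊥ then limUnder Filter.atBot g
  else if a = ⊤ then limUnder Filter.atTop g
  else g a.toReal

/-!
Where `M̃g` detaches from `|g|` near `x`, only intervals of length at least some `r > 0` compete, so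
`M̃g` is Lipschitz there and a near-optimal interval may be taken with `x` as an endpoint. If `z` is
the other endpoint and `u = 1 / (z - x)`, then comparing the average between `y` and `z` with
`M̃g y` gives, up to a small error,
`M̃g x ≤ M̃g y * (1 - u * (y - x)) + u * ∫ t in x..y, |g t|`,
with equality at `y = x`. Limits of such `u` satisfy this exactly, and differentiating at `x` yields
`(M̃g)' x = u * (M̃g x - |g x|)`. Hence `u` is unique, it lies in `[-1/r, 1/r]`, and the inequality
passes to uniform limits of `g`; by compactness the slopes converge, and with them the derivatives.

Since `|h| ≤ ‖h‖_BV` pointwise, convergence in `BV` is uniform. Functions of bounded variation are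
continuous almost everywhere, and at a point of continuity `M̃g` detaches from `|g|` as soon as it
exceeds the upper precise representative.
-/

section Averages

variable {f g : ℝ → ℝ} {a b c ε C : ℝ}

theorem mAvg_comm (g : ℝ → ℝ) (a b : ℝ) : mAvg g a b = mAvg g b a := by
  rw [mAvg, mAvg, intervalIntegral.integral_symm, ← neg_sub a b, neg_div_neg_eq]

theorem mAvg_mul_sub (g : ℝ → ℝ) (a b : ℝ) : mAvg g a b * (b - a) = ∫ t in a..b, |g t| := by
  rcases eq_or_ne a b with rfl | hab
  · simp
  · exact div_mul_cancel₀ _ (sub_ne_zero.2 hab.symm)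

theorem mAvg_le_of_abs_le (hab : a ≠ b) (hc : ∀ t ∈ uIcc a b, |g t| ≤ c) : mAvg g a b ≤ c := by
  have hint : |(∫ t in a..b, |g t|)| ≤ c * |b - a| :=
    intervalIntegral.norm_integral_le_of_norm_le_const (f := fun t => |g t|) fun t ht =>
      (abs_abs (g t)).trans_le (hc t (uIoc_subset_uIcc ht))
  calc mAvg g a b ≤ |(∫ t in a..b, |g t|)| / |b - a| := (le_abs_self _).trans_eq (abs_div _ _)
    _ ≤ c := (div_le_iff₀ (abs_pos.2 (sub_ne_zero.2 hab.symm))).2 hint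

theorem locallyIntegrable_of_abs_le (hg : AEStronglyMeasurable g volume) (hC : ∀ t, |g t| ≤ C) :
    LocallyIntegrable g :=
  (locallyIntegrable_const C).mono hg (Eventually.of_forall fun t => (hC t).trans (le_abs_self C))

theorem locallyIntegrable_abs (hg : LocallyIntegrable g) : LocallyIntegrable fun t => |g t| :=
  hg.mono hg.aestronglyMeasurable.norm (Eventually.of_forall fun t => (abs_abs (g t)).le)

theorem ae_hasDerivAt_integral_abs (hg : LocallyIntegrable g) :
    ∀ᵐ x, HasDerivAt (fun y => ∫ t in x..y, |g t|) |g x| x :=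
  (LocallyIntegrable.ae_hasDerivAt_integral (locallyIntegrable_abs hg)).mono fun x hx => hx x

theorem intervalIntegrable_abs (hg : LocallyIntegrable g) (a b : ℝ) :
    IntervalIntegrable (fun t => |g t|) volume a b :=
  intervalIntegrable_iff.2 <|
    ((locallyIntegrable_abs hg).integrableOn_isCompact isCompact_uIcc).mono_set uIoc_subset_uIcc

theorem mAvg_le_mAvg_add (hf : LocallyIntegrable f) (hg : LocallyIntegrable g) (hab : a < b)
    (h : ∀ t ∈ Icc a b, |g t| ≤ |f t| + ε) : mAvg g a b ≤ mAvg f a b + ε := by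
  have hf' := intervalIntegrable_abs hf a b
  have hpos := sub_pos.2 hab
  rw [mAvg, div_le_iff₀ hpos]
  calc ∫ t in a..b, |g t| ≤ ∫ t in a..b, (|f t| + ε) :=
        intervalIntegral.integral_mono_on hab.le (intervalIntegrable_abs hg a b)
          (hf'.add intervalIntegrable_const) h
    _ = (∫ t in a..b, |f t|) + (b - a) * ε := by
        rw [intervalIntegral.integral_add hf' intervalIntegrable_const,
          intervalIntegral.integral_const, smul_eq_mul]
    _ = (mAvg f a b + ε) * (b - a) := by rw [add_mul, mAvg_mul_sub, mul_comm ε]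

theorem mAvg_le_mAvg_add_of_subset (hg : LocallyIntegrable g) (hC : ∀ t, |g t| ≤ C) {a' b' : ℝ}
    (ha : a' ≤ a) (hab : a < b) (hb : b ≤ b') :
    mAvg g a b ≤ mAvg g a' b' + C / (b' - a') * ((b' - a') - (b - a)) := by
  have hpos : 0 < b' - a' := by linarith
  have hmono : ∫ t in a..b, |g t| ≤ ∫ t in a'..b', |g t| :=
    intervalIntegral.integral_mono_interval ha hab.le hb
      (Eventually.of_forall fun t => abs_nonneg _) (intervalIntegrable_abs hg _ _)
  have hA : mAvg g a b * ((b' - a') - (b - a)) ≤ C * ((b' - a') - (b - a)) :=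
    mul_le_mul_of_nonneg_right (mAvg_le_of_abs_le hab.ne fun t _ => hC t) (by linarith)
  refine le_of_mul_le_mul_right ?_ hpos
  calc mAvg g a b * (b' - a')
      = (∫ t in a..b, |g t|) + mAvg g a b * ((b' - a') - (b - a)) := by
        rw [← mAvg_mul_sub]; ring
    _ ≤ (∫ t in a'..b', |g t|) + C * ((b' - a') - (b - a)) := add_le_add hmono hA
    _ = (mAvg g a' b' + C / (b' - a') * ((b' - a') - (b - a))) * (b' - a') := by
        rw [← mAvg_mul_sub]; field_simp

theorem tendsto_intervalIntegral_abs_of_tendstoUniformly {ι : Type*} {l : Filter ι}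
    {G : ι → ℝ → ℝ} (hG : ∀ i, LocallyIntegrable (G i)) (hg : LocallyIntegrable g)
    (hlim : TendstoUniformly G g l) (a b : ℝ) :
    Tendsto (fun i => ∫ t in a..b, |G i t|) l (𝓝 (∫ t in a..b, |g t|)) := by
  refine Metric.tendsto_nhds.2 fun ε hε => ?_
  have hpos : 0 < |b - a| + 1 := by positivity
  filter_upwards [Metric.tendstoUniformly_iff.1 hlim _ (div_pos hε hpos)] with i hi
  rw [Real.dist_eq, ← intervalIntegral.integral_sub (intervalIntegrable_abs (hG i) a b)
    (intervalIntegrable_abs hg a b)]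
  calc |∫ t in a..b, (|G i t| - |g t|)| ≤ ε / (|b - a| + 1) * |b - a| :=
        intervalIntegral.norm_integral_le_of_norm_le_const (f := fun t => |G i t| - |g t|)
          fun t _ => (abs_abs_sub_abs_le_abs_sub _ _).trans
            ((dist_comm _ _).trans_le (hi t).le)
    _ < ε / (|b - a| + 1) * (|b - a| + 1) := by gcongr; linarith
    _ = ε := div_mul_cancel₀ _ hpos.ne'

end Averages

section MaximalFunction

variable {f g : ℝ → ℝ} {a b c m x ε C : ℝ}

theorem bddAbove_mAvg (hC : ∀ t, |g t| ≤ C) {p : ℝ → ℝ → Prop} :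
    BddAbove {y | ∃ a b : ℝ, a < b ∧ a ≤ x ∧ x ≤ b ∧ p a b ∧ y = mAvg g a b} := by
  refine ⟨C, ?_⟩
  rintro _ ⟨a, b, hab, -, -, -, rfl⟩
  exact mAvg_le_of_abs_le hab.ne fun t _ => hC t

theorem mAvg_le_uMax (hC : ∀ t, |g t| ≤ C) (hab : a ≠ b) (hx : x ∈ uIcc a b) :
    mAvg g a b ≤ uMax g x := by
  wlog hlt : a < b generalizing a b
  · rw [mAvg_comm]
    exact this hab.symm (uIcc_comm a b ▸ hx) (hab.symm.lt_of_le (not_lt.1 hlt))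
  rw [uIcc_of_le hlt.le] at hx
  refine le_csSup ?_ ⟨a, b, hlt, hx.1, hx.2, rfl⟩
  simpa only [true_and] using bddAbove_mAvg (x := x) hC (p := fun _ _ => True)

theorem uMax_le (h : ∀ a b, a < b → a ≤ x → x ≤ b → mAvg g a b ≤ c) : uMax g x ≤ c := by
  refine csSup_le ⟨_, x, x + 1, by linarith, le_rfl, by linarith, rfl⟩ ?_
  rintro _ ⟨a, b, hab, hax, hxb, rfl⟩
  exact h a b hab hax hxb

theorem exists_lt_mAvg_of_lt_uMax (hg : LocallyIntegrable g) (h : m < uMax g x) :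
    ∃ z ≠ x, m < mAvg g x z := by
  by_contra! hle
  refine h.not_ge (uMax_le fun a b hab hax hxb => ?_)
  -- The average over `[a, b]` is a convex combination of those over `[a, x]` and `[x, b]`.
  have hleft : mAvg g a x * (x - a) ≤ m * (x - a) := by
    rcases hax.eq_or_lt with rfl | hax
    · simp
    · exact mul_le_mul_of_nonneg_right (mAvg_comm g a x ▸ hle a hax.ne) (sub_nonneg.2 hax.le)
  have hright : mAvg g x b * (b - x) ≤ m * (b - x) := by
    rcases hxb.eq_or_lt with rfl | hxb
    · simp
    · exact mul_le_mul_of_nonneg_right (hle b hxb.ne') (sub_nonneg.2 hxb.le)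
  rw [mAvg_mul_sub] at hleft hright
  rw [mAvg, div_le_iff₀ (sub_pos.2 hab), ← intervalIntegral.integral_add_adjacent_intervals
    (intervalIntegrable_abs hg a x) (intervalIntegrable_abs hg x b)]
  linarith

theorem uMax_le_uMax_add (hf : LocallyIntegrable f) (hg : LocallyIntegrable g)
    (hC : ∀ t, |f t| ≤ C) (h : ∀ t, |g t| ≤ |f t| + ε) (x : ℝ) : uMax g x ≤ uMax f x + ε :=
  uMax_le fun _ _ hab hax hxb => (mAvg_le_mAvg_add hf hg hab fun t _ => h t).trans <|
    add_le_add_left (mAvg_le_uMax hC hab.ne (mem_uIcc_of_le hax hxb)) ε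

theorem abs_uMax_sub_le (hf : LocallyIntegrable f) (hg : LocallyIntegrable g)
    (hC : ∀ t, |f t| ≤ C) (h : ∀ t, |f t - g t| ≤ ε) (x : ℝ) : |uMax f x - uMax g x| ≤ ε := by
  have hgf (t : ℝ) : |g t| ≤ |f t| + ε := by
    linarith [h t, abs_sub_abs_le_abs_sub (g t) (f t), abs_sub_comm (f t) (g t)]
  have hfg (t : ℝ) : |f t| ≤ |g t| + ε := by
    linarith [h t, abs_sub_abs_le_abs_sub (f t) (g t)]
  have hgC (t : ℝ) : |g t| ≤ C + ε := (hgf t).trans (add_le_add_left (hC t) ε)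
  rw [abs_sub_le_iff, sub_le_iff_le_add', sub_le_iff_le_add']
  exact ⟨uMax_le_uMax_add hg hf hgC hfg x, uMax_le_uMax_add hf hg hC hgf x⟩

theorem tendstoUniformly_uMax {ι : Type*} {l : Filter ι} {G : ι → ℝ → ℝ}
    (hG : ∀ i, LocallyIntegrable (G i)) (hg : LocallyIntegrable g) (hC : ∀ t, |g t| ≤ C)
    (hlim : TendstoUniformly G g l) : TendstoUniformly (fun i => uMax (G i)) (uMax g) l := by
  refine Metric.tendstoUniformly_iff.2 fun ε hε => ?_
  filter_upwards [Metric.tendstoUniformly_iff.1 hlim _ (half_pos hε)] with i hi x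
  exact (abs_uMax_sub_le hg (hG i) hC (fun t => (hi t).le) x).trans_lt (half_lt_self hε)

theorem abs_le_ubar (hC : ∀ t, |g t| ≤ C)
    (hF : HasDerivAt (fun y => ∫ t in x..y, |g t|) |g x| x) : |g x| ≤ ubar g x := by
  have : Nonempty {h : ℝ // 0 < h} := ⟨⟨1, one_pos⟩⟩
  refine le_ciInf fun ⟨h, hh⟩ => ?_
  have hlim : Tendsto (fun s => mAvg g x (x + s)) (𝓝[>] 0) (𝓝 |g x|) := by
    simpa [mAvg, div_eq_inv_mul] using hF.tendsto_slope_zero_right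
  refine le_of_tendsto hlim ?_
  filter_upwards [Ioc_mem_nhdsGT hh] with s hs
  exact le_csSup (bddAbove_mAvg hC (p := fun a b => b - a ≤ h)) ⟨x, x + s,
    lt_add_of_pos_right x hs.1, le_rfl, le_add_of_nonneg_right hs.1.le, by simpa using hs.2, rfl⟩

end MaximalFunction

section LongIntervals

variable {g : ℝ → ℝ} {a b c x r s C : ℝ}

/-- The uncentered maximal function restricted to intervals of length at least `r`; for `0 < r` it
is Lipschitz, unlike `uMax` itself. -/
noncomputable def longMax (g : ℝ → ℝ) (r x : ℝ) : ℝ :=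
  sSup {y | ∃ a b : ℝ, a < b ∧ a ≤ x ∧ x ≤ b ∧ r ≤ b - a ∧ y = mAvg g a b}

theorem mAvg_le_longMax (hC : ∀ t, |g t| ≤ C) (hab : a < b) (hax : a ≤ x) (hxb : x ≤ b)
    (hr : r ≤ b - a) : mAvg g a b ≤ longMax g r x :=
  le_csSup (bddAbove_mAvg hC (p := fun a b => r ≤ b - a)) ⟨a, b, hab, hax, hxb, hr, rfl⟩

theorem longMax_le (hr : 0 < r)
    (hc : ∀ a b, a < b → a ≤ x → x ≤ b → r ≤ b - a → mAvg g a b ≤ c) : longMax g r x ≤ c := by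
  refine csSup_le ⟨_, x, x + r, by linarith, le_rfl, by linarith, by linarith, rfl⟩ ?_
  rintro _ ⟨a, b, hab, hax, hxb, hr, rfl⟩
  exact hc a b hab hax hxb hr

theorem longMax_le_uMax (hC : ∀ t, |g t| ≤ C) (hr : 0 < r) (x : ℝ) : longMax g r x ≤ uMax g x :=
  longMax_le hr fun _ _ hab hax hxb _ => mAvg_le_uMax hC hab.ne (mem_uIcc_of_le hax hxb)

theorem lipschitzWith_longMax (hg : LocallyIntegrable g) (hC : ∀ t, |g t| ≤ C) (hr : 0 < r) :
    LipschitzWith (C / r).toNNReal (longMax g r) := by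
  refine LipschitzWith.of_le_add_mul' _ fun x y => longMax_le hr fun a b hab hax hxb hlen => ?_
  have hC0 : 0 ≤ C := (abs_nonneg _).trans (hC 0)
  have ha : min a y ≤ a := min_le_left _ _
  have hb : b ≤ max b y := le_max_left _ _
  have hhull : (max b y - min a y) - (b - a) ≤ dist x y := by
    rw [Real.dist_eq]
    rcases max_cases b y with h₁ | h₁ <;> rcases min_cases a y with h₂ | h₂ <;>
      linarith [le_abs_self (x - y), neg_abs_le (x - y), abs_nonneg (x - y)]
  calc mAvg g a b
      ≤ mAvg g (min a y) (max b y)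
          + C / (max b y - min a y) * ((max b y - min a y) - (b - a)) :=
        mAvg_le_mAvg_add_of_subset hg hC ha hab hb
    _ ≤ longMax g r y + C / r * dist x y := by
        gcongr
        · exact mAvg_le_longMax hC (by linarith) (min_le_right _ _) (le_max_right _ _)
            (by linarith)
        · linarith
        · linarith

/-- The maximal function detaches from `|g|` at `x` at scale `r`: on the ball of radius `r` about
`x`, `|g|` stays below a level that `uMax g x` exceeds. -/
def IsDetachedAt (g : ℝ → ℝ) (x r : ℝ) : Prop :=
  ∃ c < uMax g x, ∀ t ∈ Metric.ball x r, |g t| ≤ c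

namespace IsDetachedAt

theorem mono (h : IsDetachedAt g x r) (hsr : s ≤ r) : IsDetachedAt g x s :=
  let ⟨c, hc, hball⟩ := h
  ⟨c, hc, fun t ht => hball t (Metric.ball_subset_ball hsr ht)⟩

theorem abs_lt_uMax (h : IsDetachedAt g x r) (hr : 0 < r) : |g x| < uMax g x :=
  let ⟨_, hc, hball⟩ := h
  (hball x (Metric.mem_ball_self hr)).trans_lt hc

theorem uMax_eq_longMax (h : IsDetachedAt g x r) (hC : ∀ t, |g t| ≤ C) (hr : 0 < r) :
    uMax g x = longMax g r x := by
  obtain ⟨c, hc, hball⟩ := h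
  have hle : uMax g x ≤ max c (longMax g r x) := uMax_le fun a b hab hax hxb => by
    rcases le_or_gt r (b - a) with hlong | hshort
    · exact (mAvg_le_longMax hC hab hax hxb hlong).trans (le_max_right _ _)
    · refine (mAvg_le_of_abs_le hab.ne fun t ht => hball t ?_).trans (le_max_left _ _)
      rw [uIcc_of_le hab.le] at ht
      rw [Metric.mem_ball, Real.dist_eq, abs_lt]
      constructor <;> linarith [ht.1, ht.2]
  exact ((le_max_iff.1 hle).resolve_left hc.not_ge).antisymm (longMax_le_uMax hC hr x)

theorem eventually_nhds (h : IsDetachedAt g x r) (hg : LocallyIntegrable g)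
    (hC : ∀ t, |g t| ≤ C) (hs : 0 < s) (hsr : s < r) : ∀ᶠ y in 𝓝 x, IsDetachedAt g y s := by
  have hx : uMax g x = longMax g s x := (h.mono hsr.le).uMax_eq_longMax hC hs
  obtain ⟨c, hc, hball⟩ := h
  have hlong : ∀ᶠ y in 𝓝 x, c < longMax g s y :=
    (lipschitzWith_longMax hg hC hs).continuous.continuousAt.eventually_const_lt (hx ▸ hc)
  filter_upwards [hlong, Metric.ball_mem_nhds x (sub_pos.2 hsr)] with y hy hyx
  refine ⟨c, hy.trans_le (longMax_le_uMax hC hs y), fun t ht =>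
    hball t (Metric.ball_subset_ball' ?_ ht)⟩
  linarith [Metric.mem_ball.1 hyx]

theorem eventually_of_tendstoUniformly {ι : Type*} {l : Filter ι} {G : ι → ℝ → ℝ}
    (h : IsDetachedAt g x r) (hG : ∀ i, LocallyIntegrable (G i)) (hg : LocallyIntegrable g)
    (hC : ∀ t, |g t| ≤ C) (hlim : TendstoUniformly G g l) :
    ∀ᶠ i in l, IsDetachedAt (G i) x r := by
  obtain ⟨c, hc, hball⟩ := h
  obtain ⟨d, hcd, hd⟩ := exists_between hc
  filter_upwards [((tendstoUniformly_uMax hG hg hC hlim).tendsto_at x).eventually_const_lt hd,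
    Metric.tendstoUniformly_iff.1 hlim _ (sub_pos.2 hcd)] with i hi hclose
  refine ⟨d, hi, fun t ht => ?_⟩
  have hGg : |G i t - g t| < d - c := (dist_comm _ _).trans_lt (hclose t)
  linarith [hball t ht, abs_sub_abs_le_abs_sub (G i t) (g t)]

end IsDetachedAt

theorem exists_isDetachedAt_of_ubar_lt_uMax (hC : ∀ t, |g t| ≤ C) (hg : ContinuousAt g x)
    (hF : HasDerivAt (fun y => ∫ t in x..y, |g t|) |g x| x) (h : ubar g x < uMax g x) :
    ∃ r > 0, IsDetachedAt g x r := by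
  obtain ⟨c, hgc, hc⟩ := exists_between ((abs_le_ubar hC hF).trans_lt h)
  obtain ⟨r, hr, hball⟩ := Metric.eventually_nhds_iff.1 (hg.abs.eventually_lt_const hgc)
  exact ⟨r, hr, c, hc, fun t ht => (hball ht).le⟩

theorem ae_differentiableAt_uMax (hg : LocallyIntegrable g) (hC : ∀ t, |g t| ≤ C) :
    ∀ᵐ x, ∀ r > 0, IsDetachedAt g x r → DifferentiableAt ℝ (uMax g) x := by
  have hlong : ∀ᵐ x, ∀ n : ℕ, DifferentiableAt ℝ (longMax g (1 / (n + 1 : ℝ))) x :=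
    ae_all_iff.2 fun n =>
      (lipschitzWith_longMax hg hC Nat.one_div_pos_of_nat).ae_differentiableAt_real
  filter_upwards [hlong] with x hx r hr hdet
  obtain ⟨n, hn⟩ := exists_nat_one_div_lt hr
  refine (hx n).congr_of_eventuallyEq ?_
  filter_upwards [hdet.eventually_nhds hg hC Nat.one_div_pos_of_nat hn] with y hy
  exact hy.uMax_eq_longMax hC Nat.one_div_pos_of_nat

end LongIntervals

section SupportSlopes

variable {g : ℝ → ℝ} {x z r u ε C : ℝ}

/-- `u` is, up to an error `ε`, a support slope of `uMax g` at `x`. The model is `u = 1 / (z - x)`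
for a near-optimal interval between `x` and `z`: the inequality then says that the average between
`y` and `z` does not exceed `uMax g y`. The value `u = 0` stands for an interval of infinite
length. -/
def IsSupportSlope (g : ℝ → ℝ) (x r ε u : ℝ) : Prop :=
  ∀ y ∈ Metric.ball x r,
    uMax g x - ε ≤ uMax g y * (1 - u * (y - x)) + u * ∫ t in x..y, |g t|

theorem isSupportSlope_inv_sub (hg : LocallyIntegrable g) (hC : ∀ t, |g t| ≤ C) (hr : 0 < r)
    (hrz : r ≤ |z - x|) (h : uMax g x - ε ≤ mAvg g x z) : IsSupportSlope g x r ε (z - x)⁻¹ := by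
  intro y hy
  rw [Metric.mem_ball, Real.dist_eq] at hy
  have hzx : z - x ≠ 0 := abs_pos.1 (hr.trans_le hrz)
  have hsmall : (z - x)⁻¹ * (y - x) < 1 := by
    refine (le_abs_self _).trans_lt ?_
    rw [abs_mul, abs_inv, inv_mul_lt_one₀ (abs_pos.2 hzx)]
    exact hy.trans_le hrz
  have hyz : y ≠ z := by
    rintro rfl
    exact hsmall.ne (inv_mul_cancel₀ hzx)
  calc uMax g x - ε ≤ mAvg g x z := h
    _ = (z - x)⁻¹ * ((∫ t in x..y, |g t|) + ∫ t in y..z, |g t|) := by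
        rw [intervalIntegral.integral_add_adjacent_intervals (intervalIntegrable_abs hg x y)
          (intervalIntegrable_abs hg y z), mAvg, div_eq_inv_mul]
    _ = mAvg g y z * (1 - (z - x)⁻¹ * (y - x)) + (z - x)⁻¹ * ∫ t in x..y, |g t| := by
        rw [← mAvg_mul_sub g y z]
        field_simp
        ring
    _ ≤ uMax g y * (1 - (z - x)⁻¹ * (y - x)) + (z - x)⁻¹ * ∫ t in x..y, |g t| := by
        gcongr
        exact mAvg_le_uMax hC hyz left_mem_uIcc

theorem IsDetachedAt.exists_isSupportSlope_of_pos (h : IsDetachedAt g x r)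
    (hg : LocallyIntegrable g) (hC : ∀ t, |g t| ≤ C) (hr : 0 < r) (hε : 0 < ε) :
    ∃ u ∈ Icc (-r⁻¹) r⁻¹, IsSupportSlope g x r ε u := by
  obtain ⟨c, hc, hball⟩ := h
  obtain ⟨z, hzx, hz⟩ := exists_lt_mAvg_of_lt_uMax hg (max_lt hc (sub_lt_self _ hε))
  obtain ⟨hcz, hεz⟩ := max_lt_iff.1 hz
  have hrz : r ≤ |z - x| := by
    by_contra! hlt
    exact hcz.not_ge <| mAvg_le_of_abs_le hzx.symm fun t ht =>
      hball t ((abs_sub_left_of_mem_uIcc ht).trans_lt hlt)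
  refine ⟨(z - x)⁻¹, abs_le.1 ?_, isSupportSlope_inv_sub hg hC hr hrz hεz.le⟩
  rw [abs_inv]
  exact inv_anti₀ hr hrz

theorem isSupportSlope_of_tendsto {ι : Type*} {l : Filter ι} [l.NeBot] {G : ι → ℝ → ℝ}
    {δ v : ι → ℝ} (hG : ∀ i, LocallyIntegrable (G i)) (hg : LocallyIntegrable g)
    (hC : ∀ t, |g t| ≤ C) (hlim : TendstoUniformly G g l) (hδ : Tendsto δ l (𝓝 ε))
    (hv : Tendsto v l (𝓝 u)) (h : ∀ᶠ i in l, IsSupportSlope (G i) x r (δ i) (v i)) :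
    IsSupportSlope g x r ε u := by
  intro y hy
  have hM (y : ℝ) := (tendstoUniformly_uMax hG hg hC hlim).tendsto_at y
  have hF := tendsto_intervalIntegral_abs_of_tendstoUniformly hG hg hlim x y
  refine le_of_tendsto_of_tendsto ((hM x).sub hδ)
    (((hM y).mul ((hv.mul_const (y - x)).const_sub 1)).add (hv.mul hF)) ?_
  filter_upwards [h] with i hi using hi y hy

theorem IsDetachedAt.exists_isSupportSlope (h : IsDetachedAt g x r) (hg : LocallyIntegrable g)
    (hC : ∀ t, |g t| ≤ C) (hr : 0 < r) : ∃ u ∈ Icc (-r⁻¹) r⁻¹, IsSupportSlope g x r 0 u := by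
  choose u hu hslope using fun n : ℕ =>
    h.exists_isSupportSlope_of_pos hg hC hr (Nat.one_div_pos_of_nat (α := ℝ) (n := n))
  obtain ⟨v, hv, φ, hφ, hlim⟩ := isCompact_Icc.tendsto_subseq hu
  refine ⟨v, hv, isSupportSlope_of_tendsto (fun _ => hg) hg hC
    (fun _ hV => Eventually.of_forall fun _ _ => refl_mem_uniformity hV)
    (tendsto_one_div_add_atTop_nhds_zero_nat.comp hφ.tendsto_atTop) hlim
    (Eventually.of_forall fun n => hslope (φ n))⟩

theorem IsSupportSlope.deriv_uMax (hu : IsSupportSlope g x r 0 u) (hr : 0 < r)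
    (hF : HasDerivAt (fun y => ∫ t in x..y, |g t|) |g x| x)
    (hd : DifferentiableAt ℝ (uMax g) x) : deriv (uMax g) x = u * (uMax g x - |g x|) := by
  have hlin : HasDerivAt (fun y => 1 - u * (y - x)) (-(u * 1)) x :=
    (((hasDerivAt_id x).sub_const x).const_mul u).const_sub 1
  -- The support inequality is an equality at `y = x`.
  have hmin : IsLocalMin (uMax g * (fun y => 1 - u * (y - x)) +
      fun y => u * ∫ t in x..y, |g t|) x := by
    filter_upwards [Metric.ball_mem_nhds x hr] with y hy
    simpa using hu y hy
  have hzero := hmin.hasDerivAt_eq_zero ((hd.hasDerivAt.mul hlin).add (hF.const_mul u))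
  simp only [sub_self, mul_zero, sub_zero, mul_one] at hzero
  linarith

end SupportSlopes

section Convergence

variable {ι : Type*} {l : Filter ι} {G : ι → ℝ → ℝ} {g : ℝ → ℝ} {x r C : ℝ}

theorem eventually_abs_le_of_tendstoUniformly (hC : ∀ t, |g t| ≤ C)
    (hlim : TendstoUniformly G g l) : ∀ᶠ i in l, ∀ t, |G i t| ≤ C + 1 := by
  filter_upwards [Metric.tendstoUniformly_iff.1 hlim 1 one_pos] with i hi t
  have hGg : |G i t - g t| < 1 := (dist_comm _ _).trans_lt (hi t)
  linarith [hC t, abs_sub_abs_le_abs_sub (G i t) (g t)]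

theorem tendsto_supportSlope {u : ι → ℝ} (hG : ∀ i, LocallyIntegrable (G i))
    (hg : LocallyIntegrable g) (hC : ∀ t, |g t| ≤ C) (hlim : TendstoUniformly G g l) (hr : 0 < r)
    (hx : |g x| < uMax g x) (hF : HasDerivAt (fun y => ∫ t in x..y, |g t|) |g x| x)
    (hd : DifferentiableAt ℝ (uMax g) x)
    (hu : ∀ᶠ i in l, u i ∈ Icc (-r⁻¹) r⁻¹ ∧ IsSupportSlope (G i) x r 0 (u i)) :
    Tendsto u l (𝓝 (deriv (uMax g) x / (uMax g x - |g x|))) := by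
  refine isCompact_Icc.tendsto_nhds_of_unique_mapClusterPt (hu.mono fun _ h => h.1)
    fun v _ hv => ?_
  obtain ⟨U, hUl, hUv⟩ := mapClusterPt_iff_ultrafilter.1 hv
  have hslope : IsSupportSlope g x r 0 v :=
    isSupportSlope_of_tendsto hG hg hC (fun V hV => hUl (hlim V hV)) tendsto_const_nhds hUv
      (hUl (hu.mono fun _ h => h.2))
  exact eq_div_of_mul_eq (sub_pos.2 hx).ne' (hslope.deriv_uMax hr hF hd).symm

theorem IsDetachedAt.tendsto_deriv_uMax [l.NeBot] (hdet : IsDetachedAt g x r) (hr : 0 < r)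
    (hG : ∀ i, LocallyIntegrable (G i)) (hg : LocallyIntegrable g) (hC : ∀ t, |g t| ≤ C)
    (hlim : TendstoUniformly G g l)
    (hF : HasDerivAt (fun y => ∫ t in x..y, |g t|) |g x| x)
    (hFG : ∀ᶠ i in l, HasDerivAt (fun y => ∫ t in x..y, |G i t|) |G i x| x)
    (hd : DifferentiableAt ℝ (uMax g) x)
    (hdG : ∀ᶠ i in l, DifferentiableAt ℝ (uMax (G i)) x) :
    Tendsto (fun i => deriv (uMax (G i)) x) l (𝓝 (deriv (uMax g) x)) := by
  have hx := hdet.abs_lt_uMax hr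
  have hexists : ∀ᶠ i in l, ∃ u, u ∈ Icc (-r⁻¹) r⁻¹ ∧ IsSupportSlope (G i) x r 0 u := by
    filter_upwards [hdet.eventually_of_tendstoUniformly hG hg hC hlim,
      eventually_abs_le_of_tendstoUniformly hC hlim] with i hi hCi
    exact hi.exists_isSupportSlope (hG i) hCi hr
  obtain ⟨u, hu⟩ := hexists.choice
  have hgap : Tendsto (fun i => uMax (G i) x - |G i x|) l (𝓝 (uMax g x - |g x|)) :=
    ((tendstoUniformly_uMax hG hg hC hlim).tendsto_at x).sub (hlim.tendsto_at x).abs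
  have hmul := (tendsto_supportSlope hG hg hC hlim hr hx hF hd hu).mul hgap
  rw [div_mul_cancel₀ _ (sub_pos.2 hx).ne'] at hmul
  refine hmul.congr' ?_
  filter_upwards [hu, hFG, hdG] with i hui hFi hdi
  exact (hui.2.deriv_uMax hr hFi hdi).symm

end Convergence

theorem eVariationOn_sub_le {α E : Type*} [LinearOrder α] [SeminormedAddCommGroup E] (f g : α → E)
    (s : Set α) : eVariationOn (f - g) s ≤ eVariationOn f s + eVariationOn g s := by
  refine iSup_le fun ⟨n, u, hu, hus⟩ => ?_
  calc ∑ i ∈ Finset.range n, edist ((f - g) (u (i + 1))) ((f - g) (u i))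
      ≤ ∑ i ∈ Finset.range n,
          (edist (f (u (i + 1))) (f (u i)) + edist (g (u (i + 1))) (g (u i))) :=
        Finset.sum_le_sum fun i _ => by
          simp only [edist_eq_enorm_sub, Pi.sub_apply]
          rw [sub_sub_sub_comm]
          exact enorm_sub_le
    _ ≤ eVariationOn f s + eVariationOn g s := by
        rw [Finset.sum_add_distrib]
        exact add_le_add (eVariationOn.sum_le hu hus) (eVariationOn.sum_le hu hus)

namespace BVfun

variable {f g : ℝ → ℝ}

theorem measurable (hg : BVfun g) : Measurable g := by
  obtain ⟨p, q, hp, hq, rfl⟩ :=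
    (BoundedVariationOn.locallyBoundedVariationOn hg).exists_monotoneOn_sub_monotoneOn
  exact (monotoneOn_univ.1 hp).measurable.sub (monotoneOn_univ.1 hq).measurable

theorem ae_continuousAt (hg : BVfun g) : ∀ᵐ x, ContinuousAt g x :=
  (BoundedVariationOn.locallyBoundedVariationOn hg).ae_differentiableAt.mono
    fun _ h => h.continuousAt

theorem abs_le_bvNorm (hg : BVfun g) (x : ℝ) : |g x| ≤ bvNorm g := by
  have hlim : Tendsto (fun y => |g y|) atBot (𝓝 |limUnder atBot g|) :=
    (BoundedVariationOn.tendsto_atBot_limUnder hg).abs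
  refine ge_of_tendsto (hlim.add_const (varOn g univ)) (Eventually.of_forall fun y => ?_)
  have hvar : |g x - g y| ≤ varOn g univ :=
    BoundedVariationOn.dist_le hg (mem_univ x) (mem_univ y)
  linarith [abs_sub_abs_le_abs_sub (g x) (g y)]

theorem locallyIntegrable (hg : BVfun g) : LocallyIntegrable g :=
  locallyIntegrable_of_abs_le hg.measurable.aestronglyMeasurable hg.abs_le_bvNorm

theorem sub (hf : BVfun f) (hg : BVfun g) : BVfun (f - g) :=
  ne_top_of_le_ne_top (ENNReal.add_ne_top.2 ⟨hf, hg⟩) (eVariationOn_sub_le f g univ)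

theorem tendstoUniformly {ι : Type*} {l : Filter ι} {G : ι → ℝ → ℝ} (hg : BVfun g)
    (hG : ∀ i, BVfun (G i)) (hlim : Tendsto (fun i => bvNorm (G i - g)) l (𝓝 0)) :
    TendstoUniformly G g l := by
  refine Metric.tendstoUniformly_iff.2 fun ε hε => ?_
  filter_upwards [hlim.eventually_lt_const hε] with i hi t
  rw [dist_comm]
  exact (((hG i).sub hg).abs_le_bvNorm t).trans_lt hi

end BVfun

theorem stmt16_general (f : ℝ → ℝ) (hf : ∀ᵐ x : ℝ, ContinuousAt f x) (hbdd : ∃ C, ∀ t, |f t| ≤ C)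
    (fj : ℕ → ℝ → ℝ) (hfj : ∀ j, LocallyIntegrable (fj j))
    (hconv : TendstoUniformly fj f atTop) :
    ∀ᵐ x : ℝ, ubar f x < uMax f x →
      Tendsto (fun j => deriv (uMax (fj j)) x) atTop (𝓝 (deriv (uMax f) x)) := by
  obtain ⟨C, hC⟩ := hbdd
  have hfint : LocallyIntegrable f := locallyIntegrable_of_abs_le
    (aestronglyMeasurable_of_tendsto_ae atTop (fun j => (hfj j).aestronglyMeasurable)
      (Eventually.of_forall hconv.tendsto_at)) hC
  obtain ⟨N, hN⟩ := eventually_atTop.1 (eventually_abs_le_of_tendstoUniformly hC hconv)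
  filter_upwards [hf, ae_hasDerivAt_integral_abs hfint, ae_differentiableAt_uMax hfint hC,
    ae_all_iff.2 fun j => ae_hasDerivAt_integral_abs (hfj j),
    ae_all_iff.2 fun j => ae_all_iff.2 fun hj : N ≤ j => ae_differentiableAt_uMax (hfj j) (hN j hj)]
    with x hx hF hd hFj hdj hlt
  obtain ⟨r, hr, hdet⟩ := exists_isDetachedAt_of_ubar_lt_uMax hC hx hF hlt
  refine hdet.tendsto_deriv_uMax hr hfj hfint hC hconv hF (Eventually.of_forall hFj)
    (hd r hr hdet) ?_
  filter_upwards [hdet.eventually_of_tendstoUniformly hfj hfint hC hconv, eventually_ge_atTop N]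
    with j hdetj hj using hdj j hj r hr hdetj

theorem stmt16 (f : ℝ → ℝ) (hf : BVfun f) (fj : ℕ → ℝ → ℝ) (hfj : ∀ j, BVfun (fj j))
    (hconv : Tendsto (fun j => bvNorm (fj j - f)) atTop (𝓝 0)) :
    ∀ᵐ x : ℝ, ubar f x < uMax f x →
      Tendsto (fun j => deriv (uMax (fj j)) x) atTop (𝓝 (deriv (uMax f) x)) :=
  stmt16_general f hf.ae_continuousAt ⟨_, hf.abs_le_bvNorm⟩ fj (fun j => (hfj j).locallyIntegrable)
    (hf.tendstoUniformly hfj hconv)
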